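/- The LF set of a canonical scenario is the convex hull of the finitely many behaviours indexed by pairs (c, l), where c is a tuple of friend outcomes and l an extreme point of the no-signalling polytope of the restricted scenario where no friend-having party uses input 1; in particular LF(S) is a convex polytope. -/

import Mathlib

open Finset MeasureTheory

section Framework

variable {I : Type} [Fintype I] [DecidableEq I]
  {M : I → Type} [∀ i, Fintype (M i)] [∀ i, DecidableEq (M i)]
  {O : I → Type} [∀ i, Fintype (O i)] [∀ i, DecidableEq (O i)]

/-- A behaviour: a family of probability distributions over joint outcomes, one per input tuple. -/
def IsBehaviour (p : (∀ i, M i) → (∀ i, O i) → ℝ) : Prop :=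
  (∀ x a, 0 ≤ p x a) ∧ ∀ x, ∑ a, p x a = 1

/-- No-signalling: the marginal over party `i`'s outcome does not depend on party `i`'s input. -/
def NoSignalling (p : (∀ i, M i) → (∀ i, O i) → ℝ) : Prop :=
  ∀ (x x' : ∀ i, M i) (i : I), (∀ j, j ≠ i → x j = x' j) →
    ∀ a : ∀ i, O i,
      ∑ b : O i, p x (Function.update a i b) = ∑ b : O i, p x' (Function.update a i b)

/-- Local hidden variable model (measure-theoretic form): a probability measure on a hidden
variable space together with local response distributions. -/
def IsLHV (p : (∀ i, M i) → (∀ i, O i) → ℝ) : Prop :=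
  ∃ (Λ : Type) (_ : MeasurableSpace Λ) (μ : Measure Λ),
    IsProbabilityMeasure μ ∧
    ∃ R : (i : I) → M i → Λ → O i → ℝ,
      (∀ i xi l a, 0 ≤ R i xi l a) ∧
      (∀ i xi l, ∑ a, R i xi l a = 1) ∧
      (∀ i xi a, Measurable (fun l => R i xi l a)) ∧
      ∀ x a, p x a = ∫ l, (∏ i, R i (x i) l (a i)) ∂μ

/-- Fully deterministic separable model with finitely many hidden variables. -/
def IsLHVFin (p : (∀ i, M i) → (∀ i, O i) → ℝ) : Prop :=
  ∃ (k : ℕ) (w : Fin k → ℝ) (α : (i : I) → M i → Fin k → O i),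
    (∀ l, 0 ≤ w l) ∧ (∑ l, w l = 1) ∧
    ∀ x a, p x a = ∑ l, w l * ∏ i, (if a i = α i (x i) l then (1 : ℝ) else 0)

/-- `J` is a joint probability distribution over all potential outcomes of all measurements of
all parties which reproduces the behaviour `p` by marginalization. -/
def IsJointFor (p : (∀ i, M i) → (∀ i, O i) → ℝ) (J : (∀ i, M i → O i) → ℝ) : Prop :=
  (∀ g, 0 ≤ J g) ∧ (∑ g, J g = 1) ∧
  ∀ x a, p x a = ∑ g ∈ Finset.univ.filter (fun g : ∀ i, M i → O i => ∀ i, g i (x i) = a i), J g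

/-- Local Agency: the marginal on any subset `V` of parties depends only on the inputs of `V`. -/
def LocalAgency (q : (∀ i, M i) → (∀ i, O i) → ℝ) : Prop :=
  ∀ (V : Finset I) (x x' : ∀ i, M i), (∀ i ∈ V, x i = x' i) →
    ∀ a : ∀ i, O i,
      ∑ b ∈ Finset.univ.filter (fun b : ∀ i, O i => ∀ i ∈ V, b i = a i), q x b
        = ∑ b ∈ Finset.univ.filter (fun b : ∀ i, O i => ∀ i ∈ V, b i = a i), q x' b

/-- Local Friendliness decomposition for friend set `F`, where `one i` is the distinguished
(query) input of party `i`. -/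
def IsLF (F : Finset I) (one : ∀ i, M i)
    (p : (∀ i, M i) → (∀ i, O i) → ℝ) : Prop :=
  ∃ (P : (∀ i : {j // j ∈ F}, O i.1) → ℝ)
    (Q : (∀ i : {j // j ∈ F}, O i.1) → (∀ i, M i) → (∀ i, O i) → ℝ),
    (∀ c, 0 ≤ P c) ∧ (∑ c, P c = 1) ∧
    (∀ c x a, 0 ≤ Q c x a) ∧ (∀ c x, ∑ a, Q c x a = 1) ∧
    (∀ c, LocalAgency (Q c)) ∧
    (∀ c x a, (∃ i : {j // j ∈ F}, x i.1 = one i.1 ∧ a i.1 ≠ c i) → Q c x a = 0) ∧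
    ∀ x a, p x a = ∑ c, P c * Q c x a

end Framework

/-- No-signalling behaviours of the public scenario restricted to input tuples in which no
party with a friend (`i ∈ F`) selects the distinguished query input `one i`. -/
def NSRes {I : Type} [Fintype I] [DecidableEq I]
    {M : I → Type} [∀ i, Fintype (M i)] [∀ i, DecidableEq (M i)]
    {O : I → Type} [∀ i, Fintype (O i)] [∀ i, DecidableEq (O i)]
    (F : Finset I) (one : ∀ i, M i)
    (q : {x : ∀ i, M i // ∀ i ∈ F, x i ≠ one i} → (∀ i, O i) → ℝ) : Prop :=
  (∀ x a, 0 ≤ q x a) ∧ (∀ x, ∑ a, q x a = 1) ∧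
  ∀ (x x' : {x : ∀ i, M i // ∀ i ∈ F, x i ≠ one i}) (i : I),
    (∀ j, j ≠ i → x.1 j = x'.1 j) →
    ∀ a : ∀ i, O i,
      ∑ b : O i, q x (Function.update a i b) = ∑ b : O i, q x' (Function.update a i b)

/-- Replace each query input of a friend-having party by the alternative input `alt i`. -/
def extendInput {I : Type} [DecidableEq I] {M : I → Type} [∀ i, DecidableEq (M i)]
    (F : Finset I) (one alt : ∀ i, M i) (x : ∀ i, M i) : ∀ i, M i :=
  fun i => if i ∈ F ∧ x i = one i then alt i else x i

theorem extendInput_avoids {I : Type} [DecidableEq I] {M : I → Type}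
    [∀ i, DecidableEq (M i)] (F : Finset I) (one alt : ∀ i, M i)
    (halt : ∀ i, alt i ≠ one i) (x : ∀ i, M i) :
    ∀ i ∈ F, extendInput F one alt x i ≠ one i := by
  intro i hi
  show (if i ∈ F ∧ x i = one i then alt i else x i) ≠ one i
  by_cases h : i ∈ F ∧ x i = one i
  · rw [if_pos h]; exact halt i
  · rw [if_neg h]; exact fun hxi => h ⟨hi, hxi⟩

/-!
Condition a Local Friendliness behaviour on the friends' outcomes `c`. A queried friend-having party
repeats the outcome recorded in `c`, so by Local Agency the conditional behaviour is determined by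
its values on the inputs where no such party is queried: it arises from a no-signalling behaviour
of the restricted scenario by overwriting the outcomes of the queried parties with `c`. Hence the
conditional behaviours for `c` are the image of the restricted no-signalling polytope under a linear
map, and LF behaviours are the mixtures over `c` of points of these images. Linear maps and mixtures
are compatible with convex hulls, so the polytope may be replaced by its extreme points. These are
finitely many, since an extreme point is determined by the set of its zeros, so no closure is needed
in the Krein-Milman theorem.
-/

section Polyhedron

variable {𝕜 ι : Type*} [Field 𝕜] [LinearOrder 𝕜] [IsStrictOrderedRing 𝕜]

theorem exists_pos_forall_mul_le [Finite ι] {s t : ι → 𝕜} (hs : ∀ i, 0 ≤ s i)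
    (hst : ∀ i, s i = 0 → t i = 0) : ∃ ε > 0, ∀ i, ε * |t i| ≤ s i := by
  have h (i : ι) : ∃ ε : Set.Ioi (0 : 𝕜), ε.1 * |t i| ≤ s i := by
    obtain hi | hi := (hs i).eq_or_lt
    · exact ⟨⟨1, one_pos⟩, by simp [← hi, hst i hi.symm]⟩
    · have hpos : 0 < |t i| + 1 := by positivity
      refine ⟨⟨s i / (|t i| + 1), div_pos hi hpos⟩, ?_⟩
      calc s i / (|t i| + 1) * |t i| ≤ s i / (|t i| + 1) * (|t i| + 1) := by gcongr; simp
        _ = s i := div_mul_cancel₀ _ hpos.ne'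
  choose ε hε using h
  obtain ⟨δ, hδ⟩ := Finite.exists_ge ε
  exact ⟨δ.1, δ.2, fun i =>
    (mul_le_mul_of_nonneg_right (Subtype.coe_le_coe.2 (hδ i)) (abs_nonneg _)).trans (hε i)⟩

variable {V : Type*} [AddCommGroup V] [Module 𝕜 V]

/-- The polyhedron cut out of the affine subspace `E` by the inequalities `0 ≤ f i v`. Equality
constraints are kept in `E`, not encoded as pairs of inequalities. -/
def polyhedron (E : AffineSubspace 𝕜 V) (f : ι → V →ₗ[𝕜] 𝕜) : Set V :=
  {v | v ∈ E ∧ ∀ i, 0 ≤ f i v}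

variable {E : AffineSubspace 𝕜 V} {f : ι → V →ₗ[𝕜] 𝕜}

theorem convex_polyhedron : Convex 𝕜 (polyhedron E f) := by
  have h : polyhedron E f = (E : Set V) ∩ ⋂ i, {v | 0 ≤ f i v} := by
    ext v
    simp [polyhedron]
  rw [h]
  exact E.convex.inter (convex_iInter fun i => convex_halfSpace_ge (f i).isLinear 0)

variable [Finite ι]

-- The line from `w` to `v` stays in the polyhedron slightly beyond `v`.
theorem eq_of_mem_extremePoints_polyhedron {v w : V}
    (hv : v ∈ (polyhedron E f).extremePoints 𝕜) (hw : w ∈ polyhedron E f)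
    (hvw : ∀ i, f i v = 0 → f i w = 0) : w = v := by
  obtain ⟨ε, hε, hle⟩ := exists_pos_forall_mul_le (t := fun i => f i w - f i v) hv.1.2
    fun i hi => by rw [hvw i hi, hi, sub_zero]
  have hmem : AffineMap.lineMap v w (-ε) ∈ polyhedron E f := by
    refine ⟨AffineMap.lineMap_mem _ hv.1.1 hw.1, fun i => ?_⟩
    have := (mul_le_mul_of_nonneg_left (le_abs_self (f i w - f i v)) hε.le).trans (hle i)
    simp only [AffineMap.lineMap_apply_module', map_add, map_smul, map_sub, smul_eq_mul]
    linarith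
  refine hv.2 hw hmem ?_
  rw [openSegment_eq_image_lineMap]
  have : 0 < 1 + ε := by positivity
  refine ⟨(1 + ε)⁻¹, ⟨by positivity, inv_lt_one_of_one_lt₀ (by linarith)⟩, ?_⟩
  simp only [AffineMap.lineMap_apply_module]
  match_scalars <;> field_simp <;> ring

theorem finite_extremePoints_polyhedron : ((polyhedron E f).extremePoints 𝕜).Finite := by
  refine Set.Finite.of_injOn (f := fun v => {i | f i v = 0}) (Set.mapsTo_univ _ _) ?_
    Set.finite_univ
  intro v hv w hw h
  exact (eq_of_mem_extremePoints_polyhedron hv hw.1 fun i hi => h.subset hi).symm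

end Polyhedron

theorem convexHull_extremePoints_polyhedron {V ι : Type*} [Finite ι] [AddCommGroup V] [Module ℝ V]
    [TopologicalSpace V] [T2Space V] [IsTopologicalAddGroup V] [ContinuousSMul ℝ V]
    [LocallyConvexSpace ℝ V] {E : AffineSubspace ℝ V} {f : ι → V →ₗ[ℝ] ℝ}
    (h : IsCompact (polyhedron E f)) :
    convexHull ℝ ((polyhedron E f).extremePoints ℝ) = polyhedron E f := by
  rw [← (finite_extremePoints_polyhedron.isClosed_convexHull ℝ).closure_eq]
  exact closure_convexHull_extremePoints h convex_polyhedron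

section ConvexMixtures

variable {𝕜 V ι : Type*} [Field 𝕜] [LinearOrder 𝕜] [AddCommGroup V] [Module 𝕜 V] [Fintype ι]

variable (𝕜) in
/-- The mixtures `∑ i, w i • z i` of one point `z i` from each `s i`. Unlike the convex hull of the
union, this set is empty as soon as one `s i` is. -/
def convexMixtures (s : ι → Set V) : Set V :=
  {v | ∃ w ∈ stdSimplex 𝕜 ι, ∃ z : ι → V, (∀ i, z i ∈ s i) ∧ ∑ i, w i • z i = v}

variable [IsStrictOrderedRing 𝕜] {s : ι → Set V}

open Pointwise in
theorem convex_convexMixtures (hs : ∀ i, Convex 𝕜 (s i)) : Convex 𝕜 (convexMixtures 𝕜 s) := by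
  rintro _ ⟨w, hw, z, hz, rfl⟩ _ ⟨w', hw', z', hz', rfl⟩ a b ha hb hab
  have h (i : ι) : ∃ y ∈ s i, (a * w i + b * w' i) • y = (a * w i) • z i + (b * w' i) • z' i := by
    rw [← Set.mem_smul_set,
      (hs i).add_smul (mul_nonneg ha (hw.1 i)) (mul_nonneg hb (hw'.1 i))]
    exact Set.add_mem_add (Set.smul_mem_smul_set (hz i)) (Set.smul_mem_smul_set (hz' i))
  choose y hy hyz using h
  refine ⟨a • w + b • w', convex_stdSimplex 𝕜 ι hw hw' ha hb hab, y, hy, ?_⟩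
  simp [hyz, sum_add_distrib, smul_sum, mul_smul]

theorem convexMixtures_subset_convexHull : convexMixtures 𝕜 s ⊆ convexHull 𝕜 (⋃ i, s i) := by
  rintro _ ⟨w, hw, z, hz, rfl⟩
  exact (convex_convexHull 𝕜 _).sum_mem (fun i _ => hw.1 i) hw.2 fun i _ =>
    subset_convexHull 𝕜 _ (Set.mem_iUnion_of_mem i (hz i))

theorem mem_convexMixtures {z : ι → V} (hz : ∀ i, z i ∈ s i) (i : ι) :
    z i ∈ convexMixtures 𝕜 s := by
  classical
  exact ⟨Pi.single i 1, single_mem_stdSimplex 𝕜 i, z, hz, by simp [Pi.single_apply]⟩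

theorem convexMixtures_image_convexHull {W : Type*} [AddCommGroup W] [Module 𝕜 W]
    (Φ : ι → W →ₗ[𝕜] V) (t : Set W) :
    convexMixtures 𝕜 (fun i => Φ i '' convexHull 𝕜 t) = convexHull 𝕜 (⋃ i, Φ i '' t) := by
  apply Set.Subset.antisymm
  · refine convexMixtures_subset_convexHull.trans (convexHull_min ?_ (convex_convexHull 𝕜 _))
    refine Set.iUnion_subset fun i => ?_
    rw [LinearMap.image_convexHull]
    exact convexHull_mono (Set.subset_iUnion (fun i => Φ i '' t) i)
  · refine convexHull_min (Set.iUnion_subset fun i => ?_) <|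
      convex_convexMixtures fun i => (convex_convexHull 𝕜 t).linear_image (Φ i)
    rintro _ ⟨q, hq, rfl⟩
    exact mem_convexMixtures (z := fun i => Φ i q)
      (fun i => Set.mem_image_of_mem _ (subset_convexHull 𝕜 t hq)) i

end ConvexMixtures

section Marginal

variable {I R : Type*} [Fintype I] [DecidableEq I] {O : I → Type*} [∀ i, Fintype (O i)]
  [∀ i, DecidableEq (O i)] [AddCommMonoid R]

/-- The marginal of the weight `f` on the parties in `V`, at the outcomes `a i` for `i ∈ V`; the
values of `a` outside `V` are irrelevant. -/
def marginal (f : (∀ i, O i) → R) (V : Finset I) (a : ∀ i, O i) : R :=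
  ∑ b with ∀ i ∈ V, b i = a i, f b

theorem marginal_erase (f : (∀ i, O i) → R) (i : I) (a : ∀ i, O i) :
    marginal f (univ.erase i) a = ∑ o, f (Function.update a i o) := by
  refine sum_bij' (fun b _ => b i) (fun o _ => Function.update a i o) ?_ ?_ ?_ ?_ ?_
  · simp
  · simp +contextual
  · exact fun b hb => Function.update_eq_iff.2 ⟨rfl, fun j hj => by simp_all⟩
  · simp
  · exact fun b hb => congrArg f (Function.eq_update_iff.2 ⟨rfl, fun j hj => by simp_all⟩)

theorem sum_filter_eq_of_marginal_eq {f g : (∀ i, O i) → R} {V : Finset I}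
    (h : ∀ a, marginal f V a = marginal g V a) {p : (∀ i, O i) → Prop} [DecidablePred p]
    (hp : DependsOn p V) : ∑ b with p b, f b = ∑ b with p b, g b := by
  rw [← sum_fiberwise _ V.restrict f, ← sum_fiberwise _ V.restrict g]
  refine sum_congr rfl fun β _ => ?_
  obtain he | ⟨a, ha⟩ := (univ.filter p |>.filter (V.restrict · = β)).eq_empty_or_nonempty
  · simp only [he, sum_empty]
  · obtain ⟨hpa, rfl⟩ : p a ∧ V.restrict a = β := by simpa using ha
    have hfib : (univ.filter p).filter (V.restrict · = V.restrict a) =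
        univ.filter fun b => ∀ i ∈ V, b i = a i := by
      ext b
      simp only [mem_filter, mem_univ, true_and, funext_iff, Subtype.forall, restrict]
      exact ⟨And.right, fun hb => ⟨(hp hb).mpr hpa, hb⟩⟩
    rw [hfib]
    exact h a

theorem marginal_eq_of_subset {f g : (∀ i, O i) → R} {V W : Finset I} (hVW : V ⊆ W)
    (h : ∀ a, marginal f W a = marginal g W a) (a : ∀ i, O i) :
    marginal f V a = marginal g V a :=
  sum_filter_eq_of_marginal_eq h fun b b' hb => by
    refine propext (forall₂_congr fun i hi => ?_)
    rw [hb i (hVW hi)]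

end Marginal

section Restricted

variable {I : Type} {M : I → Type} {F : Finset I} {one : ∀ i, M i}

/-- The inputs of the restricted scenario: no party in `F` uses its query input. -/
abbrev RestrictedInput (F : Finset I) (one : ∀ i, M i) : Type :=
  {x : ∀ i, M i // ∀ i ∈ F, x i ≠ one i}

theorem piecewise_avoids [DecidableEq I] (x x' : RestrictedInput F one) (D : Finset I) :
    ∀ i ∈ F, D.piecewise x'.1 x.1 i ≠ one i := by
  intro i hi
  by_cases hD : i ∈ D <;> simp [hD, x.2 i hi, x'.2 i hi]

variable [Fintype I] [DecidableEq I] [∀ i, Fintype (M i)] [∀ i, DecidableEq (M i)]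
  {O : I → Type} [∀ i, Fintype (O i)] [∀ i, DecidableEq (O i)]

theorem LocalAgency.nsRes {Q : (∀ i, M i) → (∀ i, O i) → ℝ} (hQ : LocalAgency Q)
    (hnonneg : ∀ x a, 0 ≤ Q x a) (hsum : ∀ x, ∑ a, Q x a = 1) :
    NSRes F one fun x a => Q x.1 a := by
  refine ⟨fun x => hnonneg x, fun x => hsum x, fun x x' i hxx' a => ?_⟩
  rw [← marginal_erase (Q x), ← marginal_erase (Q x')]
  exact hQ _ _ _ (fun j hj => hxx' j (ne_of_mem_erase hj)) a

theorem NSRes.marginal_piecewise {q : RestrictedInput F one → (∀ i, O i) → ℝ}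
    (hq : NSRes F one q) {V : Finset I} (x x' : RestrictedInput F one) {D : Finset I}
    (hD : Disjoint D V) (a : ∀ i, O i) :
    marginal (q ⟨D.piecewise x'.1 x.1, piecewise_avoids x x' D⟩) V a = marginal (q x) V a := by
  induction D using Finset.induction_on with
  | empty => simp
  | insert i D _ ih =>
    rw [disjoint_insert_left] at hD
    rw [← ih hD.2]
    refine marginal_eq_of_subset (W := univ.erase i) (subset_erase.2 ⟨subset_univ V, hD.1⟩)
      (fun b => ?_) a
    rw [marginal_erase, marginal_erase]
    exact hq.2.2 _ _ i (fun j hj => by simp [hj]) b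

theorem NSRes.marginal_eq {q : RestrictedInput F one → (∀ i, O i) → ℝ} (hq : NSRes F one q)
    {V : Finset I} {x x' : RestrictedInput F one} (h : ∀ i ∈ V, x.1 i = x'.1 i)
    (a : ∀ i, O i) : marginal (q x) V a = marginal (q x') V a := by
  rw [← hq.marginal_piecewise x x' (disjoint_compl_left (a := V)) a]
  congr
  ext i
  by_cases hi : i ∈ V <;> simp [hi, h]

variable (F one) in
/-- The affine subspace of the normalised and no-signalling, but not necessarily nonnegative,
weights of the restricted scenario. -/
def noSignallingSubspace (O : I → Type) [∀ i, Fintype (O i)] :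
    AffineSubspace ℝ (RestrictedInput F one → (∀ i, O i) → ℝ) where
  carrier := {q | (∀ x, ∑ a, q x a = 1) ∧
    ∀ (x x' : RestrictedInput F one) (i : I), (∀ j, j ≠ i → x.1 j = x'.1 j) → ∀ a : ∀ i, O i,
      ∑ b, q x (Function.update a i b) = ∑ b, q x' (Function.update a i b)}
  smul_vsub_vadd_mem' := by
    rintro r q₁ q₂ q₃ ⟨h₁, h₁'⟩ ⟨h₂, h₂'⟩ ⟨h₃, h₃'⟩
    refine ⟨fun x => ?_, fun x x' i hxx' a => ?_⟩
    · simp [sum_add_distrib, ← mul_sum, h₁, h₂, h₃]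
    · simp [sum_add_distrib, ← mul_sum, h₁' x x' i hxx', h₂' x x' i hxx', h₃' x x' i hxx']

theorem setOf_nsRes_eq_polyhedron :
    {q : RestrictedInput F one → (∀ i, O i) → ℝ | NSRes F one q} =
      polyhedron (noSignallingSubspace F one O)
        fun z : RestrictedInput F one × (∀ i, O i) => LinearMap.proj z.2 ∘ₗ LinearMap.proj z.1 := by
  ext q
  exact ⟨fun hq => ⟨hq.2, fun z => hq.1 z.1 z.2⟩, fun hq => ⟨fun x a => hq.2 (x, a), hq.1⟩⟩

theorem isCompact_setOf_nsRes :
    IsCompact {q : RestrictedInput F one → (∀ i, O i) → ℝ | NSRes F one q} := by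
  have h : {q : RestrictedInput F one → (∀ i, O i) → ℝ | NSRes F one q} =
      Set.univ.pi (fun _ => stdSimplex ℝ (∀ i, O i)) ∩ noSignallingSubspace F one O := by
    ext q
    exact ⟨fun hq => ⟨fun x _ => ⟨hq.1 x, hq.2.1 x⟩, hq.2⟩,
      fun hq => ⟨fun x => (hq.1 x trivial).1, hq.2⟩⟩
  rw [h]
  exact (isCompact_univ_pi fun _ => isCompact_stdSimplex ℝ _).inter_right
    (AffineSubspace.closed_of_finiteDimensional _)

theorem convexHull_extremePoints_nsRes :
    convexHull ℝ ({q : RestrictedInput F one → (∀ i, O i) → ℝ | NSRes F one q}.extremePoints ℝ) =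
      {q | NSRes F one q} := by
  have h := isCompact_setOf_nsRes (O := O) (F := F) (one := one)
  rw [setOf_nsRes_eq_polyhedron] at h ⊢
  exact convexHull_extremePoints_polyhedron h

end Restricted

section FriendOutcomes

variable {I : Type} [DecidableEq I] {M : I → Type} [∀ i, DecidableEq (M i)] {O : I → Type}
  {F : Finset I} {one : ∀ i, M i} {c : ∀ i : {j // j ∈ F}, O i.1}

/-- The paper's `J_x`: the parties whose outcome is not read off from a friend. -/
def unqueried [Fintype I] (F : Finset I) (one x : ∀ i, M i) : Finset I :=
  {i | ¬(i ∈ F ∧ x i = one i)}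

/-- The outcomes `b`, except that the queried friend-having parties (the paper's `F_x`) report the
recorded friend outcomes `c`. -/
def overwriteQueried (F : Finset I) (one : ∀ i, M i) (c : ∀ i : {j // j ∈ F}, O i.1)
    (x : ∀ i, M i) (b : ∀ i, O i) : ∀ i, O i :=
  fun i => if h : i ∈ F ∧ x i = one i then c ⟨i, h.1⟩ else b i

theorem overwriteQueried_congr {x x' : ∀ i, M i} {b b' : ∀ i, O i} {i : I} (hx : x i = x' i)
    (hb : b i = b' i) :
    overwriteQueried F one c x b i = overwriteQueried F one c x' b' i := by
  simp only [overwriteQueried, hx, hb]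

theorem dependsOn_overwriteQueried [Fintype I] (x : ∀ i, M i) :
    DependsOn (overwriteQueried F one c x) (unqueried F one x) := by
  intro b b' h
  funext i
  by_cases hi : i ∈ F ∧ x i = one i
  · simp [overwriteQueried, hi]
  · exact overwriteQueried_congr rfl (h i (by simpa [unqueried] using hi))

theorem overwriteQueried_eq_iff {x : ∀ i, M i} {a b : ∀ i, O i} :
    overwriteQueried F one c x b = a ↔
      (∀ i : {j // j ∈ F}, x i.1 = one i.1 → a i.1 = c i) ∧
        ∀ i, ¬(i ∈ F ∧ x i = one i) → b i = a i := by
  constructor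
  · rintro rfl
    exact ⟨fun i hi => dif_pos ⟨i.2, hi⟩, fun i hi => by rw [overwriteQueried, dif_neg hi]⟩
  · rintro ⟨hc, hb⟩
    funext i
    by_cases hi : i ∈ F ∧ x i = one i
    · rw [overwriteQueried, dif_pos hi, hc ⟨i, hi.1⟩ hi.2]
    · rw [overwriteQueried, dif_neg hi, hb i hi]

end FriendOutcomes

section Conditional

variable {I : Type} [Fintype I] [DecidableEq I] {M : I → Type}
  {O : I → Type} [∀ i, Fintype (O i)] [∀ i, DecidableEq (O i)] {F : Finset I} {one : ∀ i, M i}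

/-- The conditional behaviours allowed in a Local Friendliness decomposition, given the friend
outcomes `c`. -/
def lfConditionals (F : Finset I) (one : ∀ i, M i) (c : ∀ i : {j // j ∈ F}, O i.1) :
    Set ((∀ i, M i) → (∀ i, O i) → ℝ) :=
  {Q | (∀ x a, 0 ≤ Q x a) ∧ (∀ x, ∑ a, Q x a = 1) ∧ LocalAgency Q ∧
    ∀ x a, (∃ i : {j // j ∈ F}, x i.1 = one i.1 ∧ a i.1 ≠ c i) → Q x a = 0}

theorem setOf_isLF :
    {p : (∀ i, M i) → (∀ i, O i) → ℝ | IsLF F one p} =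
      convexMixtures ℝ (lfConditionals F one) := by
  ext p
  constructor
  · rintro ⟨P, Q, hP, hPsum, hQ, hQsum, hLA, hc, hp⟩
    refine ⟨P, ⟨hP, hPsum⟩, Q, fun c => ⟨hQ c, hQsum c, hLA c, hc c⟩, ?_⟩
    ext x a
    simp [hp, Finset.sum_apply]
  · rintro ⟨P, ⟨hP, hPsum⟩, Q, hQ, rfl⟩
    exact ⟨P, Q, hP, hPsum, fun c => (hQ c).1, fun c => (hQ c).2.1, fun c => (hQ c).2.2.1,
      fun c => (hQ c).2.2.2, fun x a => by simp [Finset.sum_apply]⟩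

variable [∀ i, DecidableEq (M i)] {alt : ∀ i, M i} {halt : ∀ i, alt i ≠ one i}
  {c : ∀ i : {j // j ∈ F}, O i.1} {q : RestrictedInput F one → (∀ i, O i) → ℝ}

/-- The paper's `℘_{(c,l)}` as a linear function of `P_l`, encoded as a push-forward along
`overwriteQueried`; see `vertexMap_eq_prod_mul_sum` for the product of deltas and a marginal. -/
def vertexMap (F : Finset I) (one alt : ∀ i, M i) (halt : ∀ i, alt i ≠ one i)
    (c : ∀ i : {j // j ∈ F}, O i.1) :
    (RestrictedInput F one → (∀ i, O i) → ℝ) →ₗ[ℝ] (∀ i, M i) → (∀ i, O i) → ℝ where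
  toFun q x a := ∑ b with overwriteQueried F one c x b = a,
    q ⟨extendInput F one alt x, extendInput_avoids F one alt halt x⟩ b
  map_add' q q' := by
    ext x a
    exact sum_add_distrib
  map_smul' r q := by
    ext x a
    exact (mul_sum _ _ _).symm

theorem vertexMap_apply (x : ∀ i, M i) (a : ∀ i, O i) :
    vertexMap F one alt halt c q x a = ∑ b with overwriteQueried F one c x b = a,
      q ⟨extendInput F one alt x, extendInput_avoids F one alt halt x⟩ b := rfl

theorem vertexMap_eq_prod_mul_sum (x : ∀ i, M i) (a : ∀ i, O i) :
    vertexMap F one alt halt c q x a =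
      (∏ i : {j // j ∈ F}, if x i.1 = one i.1 ∧ a i.1 ≠ c i then (0 : ℝ) else 1) *
        ∑ b with ∀ i, ¬(i ∈ F ∧ x i = one i) → b i = a i,
          q ⟨extendInput F one alt x, extendInput_avoids F one alt halt x⟩ b := by
  have hprod : (∏ i : {j // j ∈ F}, if x i.1 = one i.1 ∧ a i.1 ≠ c i then (0 : ℝ) else 1) =
      if ∀ i : {j // j ∈ F}, x i.1 = one i.1 → a i.1 = c i then 1 else 0 := by
    simp only [← Fintype.prod_boole, ← ite_not (_ ∧ _), not_and, not_not]
  rw [hprod, ite_mul, one_mul, zero_mul, vertexMap_apply]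
  split_ifs with h
  · exact sum_congr
      (filter_congr fun b _ => overwriteQueried_eq_iff.trans (and_iff_right h)) fun _ _ => rfl
  · rw [filter_false_of_mem fun b _ hb => h (overwriteQueried_eq_iff.1 hb).1, sum_empty]

theorem marginal_vertexMap (x : ∀ i, M i) (V : Finset I) (a : ∀ i, O i) :
    marginal (vertexMap F one alt halt c q x) V a =
      ∑ b with ∀ i ∈ V, overwriteQueried F one c x b i = a i,
        q ⟨extendInput F one alt x, extendInput_avoids F one alt halt x⟩ b := by
  refine (sum_fiberwise_eq_sum_filter _ _ _ _).trans ?_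
  simp only [mem_filter, mem_univ, true_and]

theorem vertexMap_restrict {Q : (∀ i, M i) → (∀ i, O i) → ℝ}
    (hQ : Q ∈ lfConditionals F one c) :
    vertexMap F one alt halt c (fun x => Q x.1) = Q := by
  obtain ⟨-, -, hLA, hc⟩ := hQ
  have hzero (x : ∀ i, M i) (b : ∀ i, O i) (hb : overwriteQueried F one c x b ≠ b) : Q x b = 0 := by
    refine hc x b ?_
    contrapose! hb
    exact overwriteQueried_eq_iff.2 ⟨hb, fun _ _ => rfl⟩
  ext x a
  have hext : ∀ i ∈ unqueried F one x, extendInput F one alt x i = x i := fun i hi =>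
    if_neg (mem_filter.1 hi).2
  calc ∑ b with overwriteQueried F one c x b = a, Q (extendInput F one alt x) b
    _ = ∑ b with overwriteQueried F one c x b = a, Q x b :=
      sum_filter_eq_of_marginal_eq (hLA _ _ _ hext) fun b b' h => by
        rw [dependsOn_overwriteQueried x h]
    _ = Q x a := by
      refine sum_eq_single a (fun b hb hba => hzero x b ?_) fun ha => hzero x a (by simpa using ha)
      rw [(mem_filter.1 hb).2]
      exact hba.symm

variable [∀ i, Fintype (M i)]

theorem NSRes.localAgency_vertexMap (hq : NSRes F one q) :
    LocalAgency (vertexMap F one alt halt c q) := by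
  intro V x x' hxx' a
  have hover (b : ∀ i, O i) : (∀ i ∈ V, overwriteQueried F one c x b i = a i) ↔
      ∀ i ∈ V, overwriteQueried F one c x' b i = a i :=
    forall₂_congr fun i hi => by rw [overwriteQueried_congr (hxx' i hi) rfl]
  have hext : ∀ i ∈ V, extendInput F one alt x i = extendInput F one alt x' i := fun i hi => by
    simp only [extendInput, hxx' i hi]
  change marginal _ V a = marginal _ V a
  rw [marginal_vertexMap, marginal_vertexMap]
  simp only [hover]
  refine sum_filter_eq_of_marginal_eq (hq.marginal_eq hext) fun b b' hb => propext ?_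
  exact forall₂_congr fun i hi => by rw [overwriteQueried_congr rfl (hb i hi)]

theorem NSRes.vertexMap_mem_lfConditionals (hq : NSRes F one q) :
    vertexMap F one alt halt c q ∈ lfConditionals F one c := by
  refine ⟨fun x a => sum_nonneg fun b _ => hq.1 _ b, fun x => ?_, hq.localAgency_vertexMap, ?_⟩
  · exact (sum_fiberwise _ _ _).trans (hq.2.1 _)
  · rintro x a ⟨i, hi, hac⟩
    rw [vertexMap_apply, filter_false_of_mem fun b _ hb => hac <|
      (overwriteQueried_eq_iff.1 hb).1 i hi, sum_empty]

theorem lfConditionals_eq_image_vertexMap (halt : ∀ i, alt i ≠ one i) :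
    lfConditionals (O := O) F one = fun c => vertexMap F one alt halt c '' {q | NSRes F one q} := by
  ext c Q
  constructor
  · exact fun hQ => ⟨_, hQ.2.2.1.nsRes hQ.1 hQ.2.1, vertexMap_restrict hQ⟩
  · rintro ⟨q, hq, rfl⟩
    exact hq.vertexMap_mem_lfConditionals

end Conditional

/-- the LF set is the convex hull of the finitely many behaviours indexed by
pairs `(c, q)` of a friend-outcome tuple `c` and an extreme point `q` of the no-signalling
polytope of the restricted scenario where no friend-having party uses the query input;
each such behaviour is the product of Kronecker deltas on the queried friends' outcomes with
the appropriate marginal of `q`. In particular the LF set is a convex polytope. -/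
theorem lf_convexHull_vertices {I : Type} [Fintype I] [DecidableEq I]
    {M : I → Type} [∀ i, Fintype (M i)] [∀ i, DecidableEq (M i)]
    {O : I → Type} [∀ i, Fintype (O i)] [∀ i, DecidableEq (O i)]
    (F : Finset I) (one alt : ∀ i, M i) (halt : ∀ i, alt i ≠ one i) :
    {p : (∀ i, M i) → (∀ i, O i) → ℝ | IsLF F one p} =
      convexHull ℝ {p : (∀ i, M i) → (∀ i, O i) → ℝ |
        ∃ (c : ∀ i : {j // j ∈ F}, O i.1)
          (q : {x : ∀ i, M i // ∀ i ∈ F, x i ≠ one i} → (∀ i, O i) → ℝ),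
          q ∈ Set.extremePoints ℝ
            {q' : {x : ∀ i, M i // ∀ i ∈ F, x i ≠ one i} → (∀ i, O i) → ℝ |
              NSRes F one q'} ∧
          ∀ x a, p x a =
            (∏ i : {j // j ∈ F},
              if x i.1 = one i.1 ∧ a i.1 ≠ c i then (0 : ℝ) else 1) *
            ∑ b ∈ Finset.univ.filter
                (fun b : ∀ i, O i => ∀ i, ¬(i ∈ F ∧ x i = one i) → b i = a i),
              q ⟨extendInput F one alt x, extendInput_avoids F one alt halt x⟩ b} := by
  have hvertices : ⋃ c, vertexMap F one alt halt c '' {q | NSRes F one q}.extremePoints ℝ =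
      {p : (∀ i, M i) → (∀ i, O i) → ℝ | ∃ c, ∃ q ∈ {q | NSRes F one q}.extremePoints ℝ,
        ∀ x a, p x a = vertexMap F one alt halt c q x a} := by
    ext p
    simp only [Set.mem_iUnion, Set.mem_image, Set.mem_ofPred_eq, ← funext_iff, eq_comm (a := p)]
  simp only [← vertexMap_eq_prod_mul_sum (halt := halt)]
  calc {p | IsLF F one p}
    _ = convexMixtures ℝ (lfConditionals F one) := setOf_isLF
    _ = convexMixtures ℝ fun c => vertexMap F one alt halt c '' {q | NSRes F one q} := by
      rw [lfConditionals_eq_image_vertexMap halt]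
    _ = convexMixtures ℝ fun c =>
        vertexMap F one alt halt c '' convexHull ℝ ({q | NSRes F one q}.extremePoints ℝ) := by
      rw [convexHull_extremePoints_nsRes]
    _ = convexHull ℝ (⋃ c, vertexMap F one alt halt c '' {q | NSRes F one q}.extremePoints ℝ) :=
      by rw [convexMixtures_image_convexHull]
    _ = _ := by rw [hvertices]
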